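/- arXiv:math-ph/0605012 — 2 statements merged into one kernel-verified Lean document; each statement's English description precedes it below -/
import Mathlib

section
/- With G_{0,∞}(x,x';β) = (2πβ)^{-3/2} exp(−|x−x'|²/(2β)), G_{0,L}(x,x';β) = Π_{j=1}³ g_{0,L}(x_j,x'_j;β) the method-of-images cube heat kernel, and Z_{0,L} = G_{0,L} − G_{0,∞}: there exist numerical constants c₁, c₂ > 0 such that for all L ≥ 1, β > 0, x, x' ∈ (−L/2, L/2)³ and each j ∈ {1,2,3}: |∂Z_{0,L}/∂x_j (x, x'; β)| ≤ c₁ (1+β) β^{-1/2} G_{0,∞}(x, x'; c₂ β). -/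
open Real

/-- The one-dimensional Dirichlet method-of-images heat kernel on `(−L/2, L/2)`. -/
noncomputable def g0L (L x x' β : ℝ) : ℝ :=
  (2 * π * β) ^ (-(1/2) : ℝ) *
    ∑' m : ℤ, (Real.exp (-(x - x' + 2 * m * L) ^ 2 / (2 * β)) -
      Real.exp (-(x + x' - 2 * m * L - L) ^ 2 / (2 * β)))

/-- The free heat kernel on `ℝ³`. -/
noncomputable def G0inf (x x' : Fin 3 → ℝ) (β : ℝ) : ℝ :=
  (2 * π * β) ^ (-(3/2) : ℝ) * Real.exp (-(∑ j, (x j - x' j) ^ 2) / (2 * β))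

/-- The Dirichlet heat kernel of the cube `(−L/2, L/2)³`. -/
noncomputable def G0L (L : ℝ) (x x' : Fin 3 → ℝ) (β : ℝ) : ℝ :=
  ∏ j, g0L L (x j) (x' j) β

/-- The boundary remainder `Z_{0,L} = G_{0,L} − G_{0,∞}`. -/
noncomputable def Z0L (L : ℝ) (x x' : Fin 3 → ℝ) (β : ℝ) : ℝ :=
  G0L L x x' β - G0inf x x' β

/-- The one-dimensional free heat kernel, as a function of the displacement. -/
noncomputable def freeKernel (y β : ℝ) : ℝ :=
  (2 * π * β) ^ (-(1/2) : ℝ) * Real.exp (-y ^ 2 / (2 * β))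

lemma G0inf_eq_prod (x x' : Fin 3 → ℝ) {β : ℝ} (hβ : 0 < β) :
    G0inf x x' β = ∏ i, freeKernel (x i - x' i) β := by
  have h : (2 * π * β) ^ (-(3/2) : ℝ) = ((2 * π * β) ^ (-(1/2) : ℝ)) ^ 3 := by
    rw [← Real.rpow_natCast, ← Real.rpow_mul (by positivity)]
    norm_num
  simp only [freeKernel, G0inf, Finset.prod_mul_distrib, ← Real.exp_sum, Finset.prod_const, h,
    ← Finset.sum_div, Finset.sum_neg_distrib]
  simp

lemma freeKernel_nonneg (y : ℝ) {β : ℝ} (hβ : 0 < β) : 0 ≤ freeKernel y β := by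
  unfold freeKernel
  positivity

lemma rpow_neg_half_four_mul {β : ℝ} (hβ : 0 < β) :
    (2 * π * β) ^ (-(1/2) : ℝ) = 2 * (2 * π * (4 * β)) ^ (-(1/2) : ℝ) := by
  have h4 : (4 : ℝ) ^ (-(1/2) : ℝ) = 1 / 2 := by
    rw [Real.rpow_neg (by norm_num), ← Real.sqrt_eq_rpow,
      show (4 : ℝ) = 2 ^ 2 by norm_num, Real.sqrt_sq (by norm_num)]
    norm_num
  rw [show 2 * π * (4 * β) = 4 * (2 * π * β) by ring,
    Real.mul_rpow (x := 4) (y := 2 * π * β) (by norm_num) (by positivity), h4]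
  ring

lemma exp_neg_sq_div_le (y : ℝ) {a b : ℝ} (ha : 0 < a) (hab : a ≤ b) :
    Real.exp (-y ^ 2 / a) ≤ Real.exp (-y ^ 2 / b) := by
  rw [Real.exp_le_exp, neg_div, neg_div, neg_le_neg_iff]
  gcongr

lemma freeKernel_le (y : ℝ) {β : ℝ} (hβ : 0 < β) :
    freeKernel y β ≤ 2 * freeKernel y (4 * β) := by
  unfold freeKernel
  rw [rpow_neg_half_four_mul hβ, mul_assoc]
  gcongr 2 * (_ * ?_)
  exact exp_neg_sq_div_le y (by positivity) (by linarith)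

lemma hasDerivAt_gaussian (y : ℝ) {β : ℝ} (hβ : 0 < β) :
    HasDerivAt (fun y : ℝ => Real.exp (-y ^ 2 / (2 * β)))
      (-(y / β) * Real.exp (-y ^ 2 / (2 * β))) y := by
  have h := (((hasDerivAt_pow 2 y).neg).div_const (2 * β)).exp
  refine h.congr_deriv ?_
  simp only [Pi.neg_apply]
  field_simp
  ring_nf

lemma abs_deriv_gaussian_le (y : ℝ) {β : ℝ} (hβ : 0 < β) :
    |-(y / β) * Real.exp (-y ^ 2 / (2 * β))|
      ≤ β ^ (-(1/2) : ℝ) * Real.exp (-y ^ 2 / (4 * β)) := by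
  have hs : 0 < √β := Real.sqrt_pos.2 hβ
  have hss : √β * √β = β := Real.mul_self_sqrt hβ.le
  have hr : β ^ (-(1/2) : ℝ) = (√β)⁻¹ := by
    rw [Real.rpow_neg hβ.le, Real.sqrt_eq_rpow]
  have key : |y| / √β ≤ Real.exp (y ^ 2 / (4 * β)) := by
    have h1 := Real.add_one_le_exp (y ^ 2 / (4 * β))
    have h2 : y ^ 2 / (4 * β) = (|y| / √β) ^ 2 / 4 := by
      rw [div_pow, sq_abs, Real.sq_sqrt hβ.le]
      field_simp
    nlinarith [sq_nonneg (|y| / √β - 2)]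
  have hsplit : Real.exp (-y ^ 2 / (4 * β))
      = Real.exp (y ^ 2 / (4 * β)) * Real.exp (-y ^ 2 / (2 * β)) := by
    rw [← Real.exp_add]
    congr 1
    field_simp
    ring
  rw [abs_mul, abs_neg, abs_div, abs_of_pos hβ, Real.abs_exp, hr, hsplit, ← mul_assoc]
  gcongr
  calc |y| / β = (√β)⁻¹ * (|y| / √β) := by
        rw [inv_mul_eq_div, div_div, hss]
    _ ≤ _ := by gcongr

section Images

variable {L t b : ℝ}

lemma sq_le_sq_direct_image (ht : t ∈ Set.Ioo (-(L / 2)) (L / 2))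
    (hb : b ∈ Set.Ioo (-(L / 2)) (L / 2)) (m : ℤ) :
    (t - b) ^ 2 ≤ (t - b + 2 * m * L) ^ 2 ∧ (m * L) ^ 2 ≤ (t - b + 2 * m * L) ^ 2 := by
  obtain ⟨ht1, ht2⟩ := ht
  obtain ⟨hb1, hb2⟩ := hb
  have hL : 0 < L := by linarith
  rcases lt_trichotomy m 0 with hm | rfl | hm
  · have hm' : (m : ℝ) ≤ -1 := by exact_mod_cast (by omega : m ≤ -1)
    have h1 : m * L ≤ -L := by nlinarith
    constructor <;> nlinarith
  · simp [sq_nonneg]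
  · have hm' : (1 : ℝ) ≤ m := by exact_mod_cast hm
    have h1 : L ≤ m * L := by nlinarith
    constructor <;> nlinarith

lemma sq_le_sq_reflected_image (ht : t ∈ Set.Ioo (-(L / 2)) (L / 2))
    (hb : b ∈ Set.Ioo (-(L / 2)) (L / 2)) (m : ℤ) :
    (t - b) ^ 2 ≤ (t + b - 2 * m * L - L) ^ 2 ∧
      ((m * L) ^ 2 ≤ (t + b - 2 * m * L - L) ^ 2 ∨
        ((m + 1 : ℝ) * L) ^ 2 ≤ (t + b - 2 * m * L - L) ^ 2) := by
  obtain ⟨ht1, ht2⟩ := ht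
  obtain ⟨hb1, hb2⟩ := hb
  have hL : 0 < L := by linarith
  rcases le_or_gt 0 m with hm | hm
  · have hm' : (0 : ℝ) ≤ m := by exact_mod_cast hm
    have h1 : 0 ≤ m * L := by positivity
    exact ⟨by nlinarith, Or.inl (by nlinarith)⟩
  · have hm' : (m : ℝ) + 1 ≤ 0 := by exact_mod_cast hm
    have h1 : (m + 1 : ℝ) * L ≤ 0 := by nlinarith
    exact ⟨by nlinarith, Or.inr (by nlinarith)⟩

variable {β : ℝ}

lemma exp_le_of_sq_le {d k y : ℝ} (hβ : 0 < β) (hL : 1 ≤ L) (h1 : d ^ 2 ≤ y ^ 2)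
    (h2 : (k * L) ^ 2 ≤ y ^ 2) :
    Real.exp (-y ^ 2 / (4 * β))
      ≤ Real.exp (-d ^ 2 / (8 * β)) * Real.exp (-k ^ 2 / (8 * β)) := by
  rw [← Real.exp_add, ← add_div, Real.exp_le_exp, div_le_div_iff₀ (by positivity) (by positivity)]
  have h3 : k ^ 2 ≤ (k * L) ^ 2 := by
    rw [mul_pow]
    exact le_mul_of_one_le_right (sq_nonneg k) (one_le_pow₀ hL)
  nlinarith

lemma exp_direct_image_le (hβ : 0 < β) (hL : 1 ≤ L) (ht : t ∈ Set.Ioo (-(L / 2)) (L / 2))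
    (hb : b ∈ Set.Ioo (-(L / 2)) (L / 2)) (m : ℤ) :
    Real.exp (-(t - b + 2 * m * L) ^ 2 / (4 * β))
      ≤ Real.exp (-(t - b) ^ 2 / (8 * β)) * Real.exp (-(m : ℝ) ^ 2 / (8 * β)) := by
  obtain ⟨h1, h2⟩ := sq_le_sq_direct_image ht hb m
  exact exp_le_of_sq_le hβ hL h1 h2

lemma exp_reflected_image_le (hβ : 0 < β) (hL : 1 ≤ L)
    (ht : t ∈ Set.Ioo (-(L / 2)) (L / 2)) (hb : b ∈ Set.Ioo (-(L / 2)) (L / 2)) (m : ℤ) :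
    Real.exp (-(t + b - 2 * m * L - L) ^ 2 / (4 * β))
      ≤ Real.exp (-(t - b) ^ 2 / (8 * β)) *
        (Real.exp (-(m : ℝ) ^ 2 / (8 * β)) + Real.exp (-((m + 1 : ℤ) : ℝ) ^ 2 / (8 * β))) := by
  obtain ⟨h1, h2 | h2⟩ := sq_le_sq_reflected_image ht hb m
  · refine (exp_le_of_sq_le hβ hL h1 h2).trans ?_
    gcongr
    exact le_add_of_nonneg_right (Real.exp_pos _).le
  · refine (exp_le_of_sq_le hβ hL h1 h2).trans ?_
    push_cast
    gcongr
    exact le_add_of_nonneg_left (Real.exp_pos _).le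

end Images

lemma summable_and_tsum_exp_neg_int_sq_le {β : ℝ} (hβ : 0 < β) :
    Summable (fun m : ℤ => Real.exp (-(m : ℝ) ^ 2 / (8 * β))) ∧
      ∑' m : ℤ, Real.exp (-(m : ℝ) ^ 2 / (8 * β)) ≤ 18 * (1 + β) := by
  set δ : ℝ := (√(8 * β))⁻¹ with hδ
  have hδ0 : 0 < δ := by positivity
  have hδ2 : δ ^ 2 = (8 * β)⁻¹ := by rw [hδ, inv_pow, Real.sq_sqrt (by positivity)]
  set r : ℝ := Real.exp (-δ) with hr
  have hr0 : 0 < r := Real.exp_pos _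
  have hr1 : r < 1 := by simpa [hr] using hδ0
  have hterm : ∀ (m : ℤ) (n : ℕ), (m : ℝ) ^ 2 = (n : ℝ) ^ 2 →
      Real.exp (-(m : ℝ) ^ 2 / (8 * β)) ≤ 3 * r ^ n := by
    intro m n hmn
    have h1 : Real.exp (-(m : ℝ) ^ 2 / (8 * β)) ≤ Real.exp (1 + n * (-δ)) := by
      rw [Real.exp_le_exp, hmn, div_eq_mul_inv, ← hδ2]
      nlinarith [sq_nonneg (n * δ - 1 / 2)]
    rw [Real.exp_add, Real.exp_nat_mul] at h1
    refine h1.trans ?_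
    gcongr
    linarith [Real.exp_one_lt_d9]
  have hgeo : HasSum (fun n : ℕ => 3 * r ^ n) (3 * (1 - r)⁻¹) :=
    (hasSum_geometric_of_lt_one hr0.le hr1).mul_left 3
  have hpos : ∀ n : ℕ, Real.exp (-((n : ℤ) : ℝ) ^ 2 / (8 * β)) ≤ 3 * r ^ n :=
    fun n => hterm n n (by simp)
  have hneg : ∀ n : ℕ, Real.exp (-((-((n : ℤ) + 1) : ℤ) : ℝ) ^ 2 / (8 * β)) ≤ 3 * r ^ n := by
    intro n
    refine (hterm (-((n : ℤ) + 1)) (n + 1) (by push_cast; ring)).trans ?_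
    exact mul_le_mul_of_nonneg_left
      (pow_le_pow_of_le_one hr0.le hr1.le (Nat.le_succ n)) (by norm_num)
  have hs1 := Summable.of_nonneg_of_le (fun n => (Real.exp_pos _).le) hpos hgeo.summable
  have hs2 := Summable.of_nonneg_of_le (fun n => (Real.exp_pos _).le) hneg hgeo.summable
  have H := HasSum.of_nat_of_neg_add_one
    (f := fun m : ℤ => Real.exp (-(m : ℝ) ^ 2 / (8 * β))) hs1.hasSum hs2.hasSum
  refine ⟨H.summable, ?_⟩
  rw [H.tsum_eq]
  have hle1 := hasSum_le hpos hs1.hasSum hgeo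
  have hle2 := hasSum_le hneg hs2.hasSum hgeo
  have hinv : (1 - r)⁻¹ ≤ 3 * (1 + β) := by
    have h1 : r ≤ (1 + δ)⁻¹ := by
      rw [hr, Real.exp_neg]
      gcongr
      linarith [Real.add_one_le_exp δ]
    have h2 : δ / (1 + δ) ≤ 1 - r := by
      have : δ / (1 + δ) = 1 - (1 + δ)⁻¹ := by field_simp; ring
      linarith
    have h3 : (1 - r)⁻¹ ≤ (δ / (1 + δ))⁻¹ := by gcongr
    have h4 : (δ / (1 + δ))⁻¹ = 1 + √(8 * β) := by
      rw [inv_div, add_div, div_self hδ0.ne', hδ, one_div, inv_inv, add_comm]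
    have h5 : √(8 * β) ≤ 2 + β := by
      rw [Real.sqrt_le_left (by positivity)]
      nlinarith [sq_nonneg (β - 2)]
    linarith
  linarith

section Images

variable {L t b β : ℝ}

lemma summable_direct_images (hβ : 0 < β) (hL : 1 ≤ L) (ht : t ∈ Set.Ioo (-(L / 2)) (L / 2))
    (hb : b ∈ Set.Ioo (-(L / 2)) (L / 2)) :
    Summable (fun m : ℤ => Real.exp (-(t - b + 2 * m * L) ^ 2 / (2 * β))) := by
  refine Summable.of_nonneg_of_le (fun m => (Real.exp_pos _).le) (fun m => ?_)
    ((summable_and_tsum_exp_neg_int_sq_le hβ).1.mul_left (Real.exp (-(t - b) ^ 2 / (8 * β))))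
  refine le_trans ?_ (exp_direct_image_le hβ hL ht hb m)
  exact exp_neg_sq_div_le _ (by positivity) (by linarith)

lemma summable_reflected_images (hβ : 0 < β) (hL : 1 ≤ L)
    (ht : t ∈ Set.Ioo (-(L / 2)) (L / 2)) (hb : b ∈ Set.Ioo (-(L / 2)) (L / 2)) :
    Summable (fun m : ℤ => Real.exp (-(t + b - 2 * m * L - L) ^ 2 / (2 * β))) := by
  have hq := (summable_and_tsum_exp_neg_int_sq_le hβ).1
  have hq' := (Equiv.addRight (1 : ℤ)).summable_iff.2 hq
  refine Summable.of_nonneg_of_le (fun m => (Real.exp_pos _).le) (fun m => ?_)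
    ((hq.add hq').mul_left (Real.exp (-(t - b) ^ 2 / (8 * β))))
  refine le_trans ?_ (exp_reflected_image_le hβ hL ht hb m)
  exact exp_neg_sq_div_le _ (by positivity) (by linarith)

/-- The derivative of the Dirichlet kernel, with its Gaussian bound. -/
lemma exists_hasDerivAt_g0L (hβ : 0 < β) (hL : 1 ≤ L) (ht : t ∈ Set.Ioo (-(L / 2)) (L / 2))
    (hb : b ∈ Set.Ioo (-(L / 2)) (L / 2)) :
    ∃ g' : ℝ, HasDerivAt (fun s => g0L L s b β) g' t ∧
      |g'| ≤ 108 * (1 + β) * β ^ (-(1/2) : ℝ) * freeKernel (t - b) (4 * β) := by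
  obtain ⟨hq, hqle⟩ := summable_and_tsum_exp_neg_int_sq_le hβ
  set q : ℤ → ℝ := fun m => Real.exp (-(m : ℝ) ^ 2 / (8 * β)) with hqdef
  have hq' : Summable (fun m : ℤ => q (m + 1)) := (Equiv.addRight (1 : ℤ)).summable_iff.2 hq
  have hqtsum : ∑' m : ℤ, q (m + 1) = ∑' m, q m := (Equiv.addRight (1 : ℤ)).tsum_eq q
  set c : ℝ := β ^ (-(1/2) : ℝ) with hc
  have hc0 : 0 < c := by positivity
  let F : ℤ → ℝ → ℝ := fun m s => Real.exp (-(s - b + 2 * m * L) ^ 2 / (2 * β)) -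
      Real.exp (-(s + b - 2 * m * L - L) ^ 2 / (2 * β))
  let F' : ℤ → ℝ → ℝ := fun m s =>
    -((s - b + 2 * m * L) / β) * Real.exp (-(s - b + 2 * m * L) ^ 2 / (2 * β)) -
    -((s + b - 2 * m * L - L) / β) * Real.exp (-(s + b - 2 * m * L - L) ^ 2 / (2 * β))
  let u : ℤ → ℝ := fun m => c * (2 * q m + q (m + 1))
  have hu : Summable u := ((hq.mul_left 2).add hq').mul_left c
  have hut : ∑' m, u m ≤ c * (54 * (1 + β)) := by
    simp only [u]
    rw [tsum_mul_left, (hq.mul_left 2).tsum_add hq', tsum_mul_left, hqtsum]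
    gcongr
    linarith
  have hF : ∀ m s, HasDerivAt (F m) (F' m s) s := by
    intro m s
    refine HasDerivAt.sub ?_ ?_
    · have h := (hasDerivAt_gaussian (s - b + 2 * m * L) hβ).comp s
        (((hasDerivAt_id s).sub_const b).add_const (2 * m * L))
      simpa [Function.comp_def] using h
    · have h := (hasDerivAt_gaussian (s + b - 2 * m * L - L) hβ).comp s
        ((((hasDerivAt_id s).add_const b).sub_const (2 * m * L)).sub_const L)
      simpa [Function.comp_def] using h
  have hF'le : ∀ m s, s ∈ Set.Ioo (-(L / 2)) (L / 2) →
      |F' m s| ≤ Real.exp (-(s - b) ^ 2 / (8 * β)) * u m := by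
    intro m s hs
    refine (abs_sub _ _).trans ?_
    have h1 := (abs_deriv_gaussian_le (s - b + 2 * m * L) hβ).trans
      (mul_le_mul_of_nonneg_left (exp_direct_image_le hβ hL hs hb m) hc0.le)
    have h2 := (abs_deriv_gaussian_le (s + b - 2 * m * L - L) hβ).trans
      (mul_le_mul_of_nonneg_left (exp_reflected_image_le hβ hL hs hb m) hc0.le)
    refine (add_le_add h1 h2).trans (le_of_eq ?_)
    simp only [u, hqdef]
    ring
  have hu0 : ∀ m, 0 ≤ u m := fun m => by simp only [u, hqdef]; positivity
  have hsumF : Summable (fun m => F m t) :=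
    (summable_direct_images hβ hL ht hb).sub (summable_reflected_images hβ hL ht hb)
  have hder : HasDerivAt (fun s => ∑' m, F m s) (∑' m, F' m t) t := by
    refine hasDerivAt_tsum_of_isPreconnected hu isOpen_Ioo isPreconnected_Ioo
      (fun m s _ => hF m s) (fun m s hs => ?_) ht hsumF ht
    refine (hF'le m s hs).trans ?_
    refine mul_le_of_le_one_left (hu0 m) ?_
    rw [Real.exp_le_one_iff, neg_div, neg_nonpos]
    positivity
  refine ⟨_, hder.const_mul ((2 * π * β) ^ (-(1/2) : ℝ)), ?_⟩
  have hbd : |∑' m, F' m t| ≤ Real.exp (-(t - b) ^ 2 / (8 * β)) * (c * (54 * (1 + β))) := by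
    have h := tsum_of_norm_bounded (f := fun m => F' m t)
      (hu.hasSum.mul_left (Real.exp (-(t - b) ^ 2 / (8 * β)))) (fun m => hF'le m t ht)
    refine h.trans ?_
    gcongr
  rw [abs_mul, abs_of_pos (by positivity : 0 < (2 * π * β) ^ (-(1/2) : ℝ)),
    rpow_neg_half_four_mul hβ]
  refine (mul_le_mul_of_nonneg_left hbd (by positivity)).trans (le_of_eq ?_)
  rw [freeKernel, show 2 * (4 * β) = 8 * β by ring]
  ring

/-- The images alternate in sign and recede from the evaluation point on either side, so the
Dirichlet kernel is dominated by the free kernel. -/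
lemma abs_g0L_le (hβ : 0 < β) (hL : 1 ≤ L) (ht : t ∈ Set.Ioo (-(L / 2)) (L / 2))
    (hb : b ∈ Set.Ioo (-(L / 2)) (L / 2)) :
    |g0L L t b β| ≤ freeKernel (t - b) β := by
  have hA := summable_direct_images hβ hL ht hb
  have hB := summable_reflected_images hβ hL ht hb
  have mono : ∀ y z : ℝ, z ^ 2 ≤ y ^ 2 →
      Real.exp (-y ^ 2 / (2 * β)) ≤ Real.exp (-z ^ 2 / (2 * β)) := by
    intro y z h
    gcongr
  set A : ℤ → ℝ := fun m => Real.exp (-(t - b + 2 * m * L) ^ 2 / (2 * β)) with hAdef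
  set B : ℤ → ℝ := fun m => Real.exp (-(t + b - 2 * m * L - L) ^ 2 / (2 * β)) with hBdef
  have hA0 : A 0 = Real.exp (-(t - b) ^ 2 / (2 * β)) := by simp [hAdef]
  have hB0 : ∀ m, B m ≤ A 0 := fun m => by
    rw [hA0]
    exact mono _ _ (sq_le_sq_reflected_image ht hb m).1
  have hAp : Summable (fun n : ℕ => A n) := hA.comp_injective Nat.cast_injective
  have hBp : Summable (fun n : ℕ => B n) := hB.comp_injective Nat.cast_injective
  have hinj : Function.Injective (fun n : ℕ => -((n : ℤ) + 1)) := fun m n h => by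
    simpa using h
  have hAn : Summable (fun n : ℕ => A (-((n : ℤ) + 1))) := hA.comp_injective hinj
  have hBn : Summable (fun n : ℕ => B (-((n : ℤ) + 1))) := hB.comp_injective hinj
  have hAs : ∑' m, A m = ∑' n : ℕ, A n + ∑' n : ℕ, A (-((n : ℤ) + 1)) :=
    (HasSum.of_nat_of_neg_add_one hAp.hasSum hAn.hasSum).tsum_eq
  have hBs : ∑' m, B m = ∑' n : ℕ, B n + ∑' n : ℕ, B (-((n : ℤ) + 1)) :=
    (HasSum.of_nat_of_neg_add_one hBp.hasSum hBn.hasSum).tsum_eq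
  have hAp1 := (summable_nat_add_iff 1).2 hAp
  have hBp1 := (summable_nat_add_iff 1).2 hBp
  have hBn1 := (summable_nat_add_iff 1).2 hBn
  have hApe := hAp.tsum_eq_zero_add
  have hBpe := hBp.tsum_eq_zero_add
  have hBne := hBn.tsum_eq_zero_add
  obtain ⟨ht1, ht2⟩ := ht
  obtain ⟨hb1, hb2⟩ := hb
  have hnL : ∀ n : ℕ, (0 : ℝ) ≤ n * L := fun n => by positivity
  have e1 : ∑' n : ℕ, A (-((n : ℤ) + 1)) ≤ ∑' n : ℕ, B n := by
    refine hAn.tsum_le_tsum (fun n => mono _ _ ?_) hBp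
    push_cast
    nlinarith [hnL n]
  have e2 : ∑' n : ℕ, A ((n + 1 : ℕ) : ℤ) ≤ ∑' n : ℕ, B (-((n : ℤ) + 1)) := by
    refine hAp1.tsum_le_tsum (fun n => mono _ _ ?_) hBn
    push_cast
    nlinarith [hnL n]
  have e3 : ∑' n : ℕ, B ((n + 1 : ℕ) : ℤ) ≤ ∑' n : ℕ, A (-((n : ℤ) + 1)) := by
    refine hBp1.tsum_le_tsum (fun n => mono _ _ ?_) hAn
    push_cast
    nlinarith [hnL n]
  have e4 : ∑' n : ℕ, B (-(((n + 1 : ℕ) : ℤ) + 1)) ≤ ∑' n : ℕ, A ((n + 1 : ℕ) : ℤ) := by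
    refine hBn1.tsum_le_tsum (fun n => mono _ _ ?_) hAp1
    push_cast
    nlinarith [hnL n]
  have f1 := hB0 ((0 : ℕ) : ℤ)
  have f2 := hB0 (-(((0 : ℕ) : ℤ) + 1))
  simp only [Nat.cast_zero] at hApe hBpe hBne f1 f2
  have hsum : |∑' m, (A m - B m)| ≤ A 0 := by
    rw [hA.tsum_sub hB, hAs, hBs, abs_le]
    constructor <;> linarith
  unfold g0L freeKernel
  rw [abs_mul, abs_of_pos (by positivity : 0 < (2 * π * β) ^ (-(1/2) : ℝ)), ← hA0]
  gcongr

end Images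

lemma hasDerivAt_freeKernel (y : ℝ) {β : ℝ} (hβ : 0 < β) :
    ∃ p' : ℝ, HasDerivAt (fun y => freeKernel y β) p' y ∧
      |p'| ≤ 2 * β ^ (-(1/2) : ℝ) * freeKernel y (4 * β) := by
  refine ⟨_, (hasDerivAt_gaussian y hβ).const_mul ((2 * π * β) ^ (-(1/2) : ℝ)), ?_⟩
  rw [abs_mul, abs_of_pos (by positivity : 0 < (2 * π * β) ^ (-(1/2) : ℝ)),
    rpow_neg_half_four_mul hβ]
  refine (mul_le_mul_of_nonneg_left (abs_deriv_gaussian_le y hβ) (by positivity)).trans ?_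
  have h : Real.exp (-y ^ 2 / (4 * β)) ≤ Real.exp (-y ^ 2 / (2 * (4 * β))) :=
    exp_neg_sq_div_le y (by positivity) (by linarith)
  rw [freeKernel]
  calc _ ≤ 2 * (2 * π * (4 * β)) ^ (-(1/2) : ℝ) *
        (β ^ (-(1/2) : ℝ) * Real.exp (-y ^ 2 / (2 * (4 * β)))) := by gcongr
    _ = _ := by ring

lemma prod_update_eq (f : ℝ → ℝ → ℝ) (x x' : Fin 3 → ℝ) (j : Fin 3) (t : ℝ) :
    ∏ i, f (Function.update x j t i) (x' i)
      = f t (x' j) * ∏ i ∈ Finset.univ.erase j, f (x i) (x' i) := by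
  rw [← Finset.mul_prod_erase _ _ (Finset.mem_univ j), Function.update_self]
  congr 1
  refine Finset.prod_congr rfl fun i hi => ?_
  rw [Function.update_of_ne (Finset.ne_of_mem_erase hi)]

/-- Gaussian bound for the first spatial derivatives of the boundary remainder:
`|∂Z_{0,L}/∂x_j (x, x'; β)| ≤ c₁ (1+β) β^{-1/2} G_{0,∞}(x, x'; c₂ β)`. -/
theorem stmt_11 :
    ∃ c₁ c₂ : ℝ, 0 < c₁ ∧ 0 < c₂ ∧
      ∀ (L β : ℝ) (x x' : Fin 3 → ℝ) (j : Fin 3), 1 ≤ L → 0 < β →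
        (∀ i, x i ∈ Set.Ioo (-(L / 2)) (L / 2)) →
        (∀ i, x' i ∈ Set.Ioo (-(L / 2)) (L / 2)) →
          |deriv (fun t : ℝ => Z0L L (Function.update x j t) x' β) (x j)|
            ≤ c₁ * (1 + β) * β ^ (-(1/2) : ℝ) * G0inf x x' (c₂ * β) := by
  refine ⟨440, 4, by norm_num, by norm_num, fun L β x x' j hL hβ hx hx' => ?_⟩
  have hβ4 : 0 < 4 * β := by positivity
  obtain ⟨g', hg, hg'⟩ := exists_hasDerivAt_g0L hβ hL (hx j) (hx' j)
  obtain ⟨p', hp, hp'⟩ := hasDerivAt_freeKernel (x j - x' j) hβ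
  set P : ℝ := ∏ i ∈ Finset.univ.erase j, g0L L (x i) (x' i) β
  set Q : ℝ := ∏ i ∈ Finset.univ.erase j, freeKernel (x i - x' i) β
  set R : ℝ := ∏ i ∈ Finset.univ.erase j, freeKernel (x i - x' i) (4 * β)
  have hQR : Q ≤ 4 * R := by
    have hcard : (Finset.univ.erase j).card = 2 := by simp
    calc Q ≤ ∏ i ∈ Finset.univ.erase j, (2 * freeKernel (x i - x' i) (4 * β)) :=
          Finset.prod_le_prod (fun i _ => freeKernel_nonneg _ hβ) (fun i _ => freeKernel_le _ hβ)
      _ = 4 * R := by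
          rw [Finset.prod_mul_distrib, Finset.prod_const, hcard]
          norm_num [R]
  have hPQ : |P| ≤ Q := by
    rw [Finset.abs_prod]
    exact Finset.prod_le_prod (fun i _ => abs_nonneg _)
      (fun i _ => abs_g0L_le hβ hL (hx i) (hx' i))
  have hQ0 : 0 ≤ Q := Finset.prod_nonneg fun i _ => freeKernel_nonneg _ hβ
  have hZ : (fun t : ℝ => Z0L L (Function.update x j t) x' β)
      = fun t => g0L L t (x' j) β * P - freeKernel (t - x' j) β * Q := by
    funext t
    rw [Z0L, G0L, G0inf_eq_prod _ _ hβ, prod_update_eq (fun a b => g0L L a b β),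
      prod_update_eq (fun a b => freeKernel (a - b) β)]
  have hp2 : HasDerivAt (fun t => freeKernel (t - x' j) β) p' (x j) := hp.comp_sub_const _ _
  have hR : G0inf x x' (4 * β) = freeKernel (x j - x' j) (4 * β) * R := by
    rw [G0inf_eq_prod _ _ hβ4, ← Finset.mul_prod_erase _ _ (Finset.mem_univ j)]
  have hderiv : HasDerivAt (fun t => g0L L t (x' j) β * P - freeKernel (t - x' j) β * Q)
      (g' * P - p' * Q) (x j) := (hg.mul_const P).sub (hp2.mul_const Q)
  rw [hZ, hderiv.deriv, hR]
  set c : ℝ := β ^ (-(1/2) : ℝ)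
  set k : ℝ := freeKernel (x j - x' j) (4 * β)
  have hc : 0 ≤ c := by positivity
  have hk : 0 ≤ k := freeKernel_nonneg _ hβ4
  have hp3 : |p'| ≤ 2 * (1 + β) * c * k := by
    refine hp'.trans ?_
    gcongr
    linarith
  calc |g' * P - p' * Q| ≤ |g'| * |P| + |p'| * |Q| := by
        rw [← abs_mul, ← abs_mul]
        exact abs_sub _ _
    _ ≤ (108 * (1 + β) * c * k) * (4 * R) + (2 * (1 + β) * c * k) * (4 * R) := by
        rw [abs_of_nonneg hQ0]
        gcongr
        exact hPQ.trans hQR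
    _ = 440 * (1 + β) * c * (k * R) := by ring
end

section
/- With G_{0,∞}(x,x';β) = (2πβ)^{-3/2} exp(−|x−x'|²/(2β)), G_{0,L}(x,x';β) = Π_{j=1}³ g_{0,L}(x_j,x'_j;β) the method-of-images cube heat kernel, and Z_{0,L} = G_{0,L} − G_{0,∞}: there exist numerical constants c₁, c₂ > 0 such that for all L ≥ 1, β > 0, x, x' ∈ (−L/2, L/2)³ and all j, k ∈ {1,2,3}, both |∂Z_{0,L}/∂β (x, x'; β)| and |∂²Z_{0,L}/∂x_j ∂x'_k (x, x'; β)| are bounded by c₁ (1+β) β^{-1} G_{0,∞}(x, x'; c₂ β). -/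
open Real

/-- The one-dimensional heat kernel (`i = 0`) and its first two space derivatives. -/
noncomputable def heatKer : ℕ → ℝ → ℝ → ℝ
  | 0, u, β => (2 * π * β) ^ (-(1/2) : ℝ) * Real.exp (-u ^ 2 / (2 * β))
  | 1, u, β => -(u / β) * ((2 * π * β) ^ (-(1/2) : ℝ) * Real.exp (-u ^ 2 / (2 * β)))
  | _, u, β => (u ^ 2 / β ^ 2 - 1 / β) *
      ((2 * π * β) ^ (-(1/2) : ℝ) * Real.exp (-u ^ 2 / (2 * β)))

/-- The `2L`-periodization of `heatKer`. -/
noncomputable def heatTheta (i : ℕ) (L a β : ℝ) : ℝ := ∑' m : ℤ, heatKer i (a + 2 * m * L) β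

lemma hasDerivAt_exp_neg_sq_div (u β : ℝ) :
    HasDerivAt (fun v : ℝ => Real.exp (-v ^ 2 / (2 * β)))
      (-(u / β) * Real.exp (-u ^ 2 / (2 * β))) u := by
  have h : HasDerivAt (fun v : ℝ => -v ^ 2 / (2 * β)) (-(u / β)) u := by
    refine ((hasDerivAt_pow 2 u).fun_neg.div_const (2 * β)).congr_deriv ?_
    by_cases hβ : β = 0
    · simp [hβ]
    · simp; field_simp
  exact h.exp.congr_deriv (mul_comm _ _)

lemma hasDerivAt_heatKer_zero (u β : ℝ) :
    HasDerivAt (fun v => heatKer 0 v β) (heatKer 1 u β) u := by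
  simp only [heatKer]
  exact ((hasDerivAt_exp_neg_sq_div u β).const_mul ((2 * π * β) ^ (-(1/2) : ℝ))).congr_deriv
    (by ring)

lemma hasDerivAt_heatKer_one (u β : ℝ) :
    HasDerivAt (fun v => heatKer 1 v β) (heatKer 2 u β) u := by
  simp only [heatKer]
  exact (((hasDerivAt_id' u).div_const β).fun_neg.fun_mul
    ((hasDerivAt_exp_neg_sq_div u β).const_mul ((2 * π * β) ^ (-(1/2) : ℝ)))).congr_deriv
    (by ring)

lemma hasDerivAt_heatKer_time (u : ℝ) {β : ℝ} (hβ : 0 < β) :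
    HasDerivAt (fun b => heatKer 0 u b) (heatKer 2 u β / 2) β := by
  simp only [heatKer]
  have h1 : HasDerivAt (fun b : ℝ => (2 * π * b) ^ (-(1/2) : ℝ))
      (-(1 / (2 * β)) * (2 * π * β) ^ (-(1/2) : ℝ)) β := by
    have hp : 2 * π * β ≠ 0 := by positivity
    refine (((hasDerivAt_id' β).const_mul (2 * π)).rpow_const (p := -(1/2))
      (Or.inl hp)).congr_deriv ?_
    rw [Real.rpow_sub_one hp]
    field_simp
  have h2 : HasDerivAt (fun b : ℝ => -u ^ 2 / (2 * b)) (u ^ 2 / (2 * β ^ 2)) β := by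
    simp only [div_eq_mul_inv]
    refine ((((hasDerivAt_id' β).const_mul 2).fun_inv (by positivity)).const_mul
      (-u ^ 2)).congr_deriv ?_
    field_simp
  refine (h1.fun_mul h2.exp).congr_deriv ?_
  field_simp
  ring

lemma two_pi_mul_rpow_le {β : ℝ} (hβ : 0 < β) :
    (2 * π * β) ^ (-(1/2) : ℝ) ≤ (√β)⁻¹ := by
  rw [Real.rpow_neg (by positivity), ← Real.sqrt_eq_rpow]
  have : 0 < √β := Real.sqrt_pos.2 hβ
  gcongr
  nlinarith [Real.pi_gt_three]

lemma abs_heatKer_le {i : ℕ} (hi : i ≤ 2) (u : ℝ) {β : ℝ} (hβ : 0 < β) :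
    |heatKer i u β| ≤ 4 * (√β)⁻¹ ^ (i + 1) * Real.exp (-u ^ 2 / (4 * β)) := by
  have hs : 0 < √β := Real.sqrt_pos.2 hβ
  obtain ⟨p, hp⟩ : ∃ p, p = (√β)⁻¹ := ⟨_, rfl⟩
  have hp0 : 0 < p := by rw [hp]; positivity
  have hpb : β⁻¹ = p ^ 2 := by rw [hp, inv_pow, Real.sq_sqrt hβ.le]
  have hq := two_pi_mul_rpow_le hβ
  rw [← hp] at hq ⊢
  have hq0 : 0 < (2 * π * β) ^ (-(1/2) : ℝ) := by positivity
  have e1 : -u ^ 2 / (2 * β) = -(u * p) ^ 2 / 4 + -(u * p) ^ 2 / 4 := by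
    rw [mul_pow, ← hpb]; field_simp; ring
  have e2 : -u ^ 2 / (4 * β) = -(u * p) ^ 2 / 4 := by
    rw [mul_pow, ← hpb]; field_simp
  have hE : (1 + (u * p) ^ 2 / 4) * Real.exp (-(u * p) ^ 2 / 4) ≤ 1 := by
    have h := Real.add_one_le_exp ((u * p) ^ 2 / 4)
    have h3 : Real.exp ((u * p) ^ 2 / 4) * Real.exp (-(u * p) ^ 2 / 4) = 1 := by
      rw [← Real.exp_add]; simp; ring
    rw [← h3]
    gcongr
    linarith
  have hker : ∀ A : ℝ, |A| ≤ 4 * p ^ i * (1 + (u * p) ^ 2 / 4) →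
      |A * ((2 * π * β) ^ (-(1/2) : ℝ) * Real.exp (-u ^ 2 / (2 * β)))| ≤
        4 * p ^ (i + 1) * Real.exp (-u ^ 2 / (4 * β)) := by
    intro A hA
    rw [abs_mul, abs_of_pos (by positivity : 0 < (2 * π * β) ^ (-(1/2) : ℝ) * Real.exp (-u ^ 2 / (2 * β))), e1, e2, Real.exp_add]
    calc _ ≤ (4 * p ^ i * (1 + (u * p) ^ 2 / 4)) * (p * (Real.exp (-(u * p) ^ 2 / 4) * Real.exp (-(u * p) ^ 2 / 4))) := by gcongr
      _ = 4 * p ^ (i + 1) * Real.exp (-(u * p) ^ 2 / 4) * ((1 + (u * p) ^ 2 / 4) * Real.exp (-(u * p) ^ 2 / 4)) := by ring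
      _ ≤ 4 * p ^ (i + 1) * Real.exp (-(u * p) ^ 2 / 4) * 1 := by gcongr
      _ = _ := mul_one _
  interval_cases i
  · have := hker 1 (by simp; nlinarith [sq_nonneg (u * p)])
    simpa [heatKer] using this
  · refine hker _ ?_
    rw [div_eq_mul_inv, hpb, show -(u * p ^ 2) = p * (-(u * p)) by ring, abs_mul, abs_of_pos hp0,
      abs_neg, show 4 * p ^ 1 * (1 + (u * p) ^ 2 / 4) = p * (4 + (u * p) ^ 2) by ring]
    gcongr
    rw [abs_le]
    constructor <;> nlinarith [sq_nonneg (u * p - 1), sq_nonneg (u * p + 1)]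
  · refine hker _ ?_
    rw [div_eq_mul_inv, one_div, ← inv_pow, hpb,
      show u ^ 2 * (p ^ 2) ^ 2 - p ^ 2 = p ^ 2 * ((u * p) ^ 2 - 1) by ring, abs_mul,
      abs_of_pos (by positivity : 0 < p ^ 2),
      show 4 * p ^ 2 * (1 + (u * p) ^ 2 / 4) = p ^ 2 * (4 + (u * p) ^ 2) by ring]
    gcongr
    rw [abs_le]
    constructor <;> nlinarith [sq_nonneg (u * p)]

lemma exists_hasSum_exp_neg_mul_abs {s : ℝ} (hs : 0 < s) :
    ∃ S, HasSum (fun m : ℤ => Real.exp (-(s * |(m : ℝ)|))) S ∧ S ≤ 1 + 2 / s := by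
  have hq0 : 0 < Real.exp (-s) := Real.exp_pos _
  have hq1 : Real.exp (-s) < 1 := by simpa using hs
  have hg := hasSum_geometric_of_lt_one hq0.le hq1
  have h1 : HasSum (fun n : ℕ => Real.exp (-(s * |((n : ℤ) : ℝ)|))) (1 - Real.exp (-s))⁻¹ := by
    convert hg using 2 with n
    rw [← Real.exp_nat_mul]
    simp
    ring
  have h2 : HasSum (fun n : ℕ => Real.exp (-(s * |((-((n : ℤ) + 1) : ℤ) : ℝ)|)))
      (Real.exp (-s) * (1 - Real.exp (-s))⁻¹) := by
    refine HasSum.congr_fun (hg.mul_left (Real.exp (-s))) fun n => ?_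
    rw [← Real.exp_nat_mul, ← Real.exp_add]
    push_cast
    rw [abs_neg, abs_of_nonneg (by positivity)]
    congr 1
    ring
  refine ⟨_, HasSum.of_nat_of_neg_add_one h1 h2, ?_⟩
  have h3 : Real.exp (-s) * (1 + s) ≤ 1 := by
    have h := Real.add_one_le_exp s
    have : Real.exp (-s) * Real.exp s = 1 := by rw [← Real.exp_add]; simp
    nlinarith
  have h4 : 0 < 1 - Real.exp (-s) := by linarith
  rw [← one_add_mul, ← div_eq_mul_inv, div_le_iff₀ h4]
  field_simp
  nlinarith

/-- A summable majorant for `m ↦ exp (-(a + 2mL)² / (8β))`, `|a| ≤ 2L`. -/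
noncomputable def latticeBd (L β : ℝ) (m : ℤ) : ℝ :=
  2 * (Real.exp (-(L / (2 * √β) * |(m : ℝ)|)) + Real.exp (-(L / (2 * √β) * |((m + 1 : ℤ) : ℝ)|)) +
    Real.exp (-(L / (2 * √β) * |((m - 1 : ℤ) : ℝ)|)))

lemma exists_hasSum_latticeBd {L β : ℝ} (hL : 0 < L) (hβ : 0 < β) :
    ∃ S, HasSum (latticeBd L β) S ∧ S ≤ 24 * (1 + √β / L) := by
  have hsb : 0 < √β := Real.sqrt_pos.2 hβ
  obtain ⟨S, hS, hS'⟩ := exists_hasSum_exp_neg_mul_abs (s := L / (2 * √β)) (by positivity)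
  refine ⟨2 * (S + S + S), ?_, ?_⟩
  · refine ((hS.add ?_).add ?_).mul_left 2
    · exact (Equiv.addRight (1 : ℤ)).hasSum_iff.2 hS
    · exact (Equiv.subRight (1 : ℤ)).hasSum_iff.2 hS
  · have : 2 / (L / (2 * √β)) = 4 * (√β / L) := by field_simp; ring
    rw [this] at hS'
    have : 0 < √β / L := by positivity
    linarith

lemma exp_neg_sq_le_latticeBd {L β a : ℝ} (hL : 0 < L) (hβ : 0 < β) (ha : |a| ≤ 2 * L) (m : ℤ) :
    Real.exp (-(a + 2 * m * L) ^ 2 / (8 * β)) ≤ latticeBd L β m := by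
  have hsb : 0 < √β := Real.sqrt_pos.2 hβ
  have main : ∀ n : ℝ, 0 ≤ n → 2 * L * n ≤ |a + 2 * m * L| →
      Real.exp (-(a + 2 * m * L) ^ 2 / (8 * β)) ≤ 2 * Real.exp (-(L / (2 * √β) * n)) := by
    intro n hn h
    have h2 : (2 * L * n) ^ 2 ≤ (a + 2 * m * L) ^ 2 := by
      rw [← sq_abs (a + _)]; gcongr
    obtain ⟨z, hz⟩ : ∃ z, z = L / (2 * √β) * n := ⟨_, rfl⟩
    have hz2 : (2 * L * n) ^ 2 / (8 * β) = 2 * z ^ 2 := by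
      rw [hz, mul_pow _ n, mul_pow _ n, div_pow, mul_pow 2 (√β), Real.sq_sqrt hβ.le]; field_simp; ring
    have h3 : -(a + 2 * m * L) ^ 2 / (8 * β) ≤ 1 / 4 - z := by
      have : (2 * L * n) ^ 2 / (8 * β) ≤ (a + 2 * m * L) ^ 2 / (8 * β) := by gcongr
      rw [neg_div]
      nlinarith [sq_nonneg (z - 1 / 2)]
    have h4 : Real.exp (1 / 4) ≤ 2 := by
      have := Real.exp_bound_div_one_sub_of_interval (x := 1 / 4) (by norm_num) (by norm_num)
      norm_num at this ⊢; linarith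
    rw [← hz]
    calc _ ≤ Real.exp (1 / 4 + -z) := by gcongr; linarith
      _ = Real.exp (1 / 4) * Real.exp (-z) := Real.exp_add _ _
      _ ≤ _ := by gcongr
  have ha' := abs_le.1 ha
  unfold latticeBd
  have p1 := Real.exp_pos (-(L / (2 * √β) * |(m : ℝ)|))
  have p2 := Real.exp_pos (-(L / (2 * √β) * |((m + 1 : ℤ) : ℝ)|))
  have p3 := Real.exp_pos (-(L / (2 * √β) * |((m - 1 : ℤ) : ℝ)|))
  rcases lt_trichotomy m 0 with hm | hm | hm
  · have hm' : ((m + 1 : ℤ) : ℝ) ≤ 0 := by exact_mod_cast hm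
    have := main |((m + 1 : ℤ) : ℝ)| (abs_nonneg _) (by
      rw [abs_of_nonpos hm']
      refine le_trans ?_ (neg_le_abs _)
      push_cast; nlinarith)
    linarith
  · have := main |(m : ℝ)| (abs_nonneg _) (by simp [hm])
    linarith
  · have hm' : 0 ≤ ((m - 1 : ℤ) : ℝ) := by exact_mod_cast (by omega : 0 ≤ m - 1)
    have := main |((m - 1 : ℤ) : ℝ)| (abs_nonneg _) (by
      rw [abs_of_nonneg hm']
      refine le_trans ?_ (le_abs_self _)
      push_cast; nlinarith)
    linarith

lemma abs_heatKer_le_latticeBd {i : ℕ} (hi : i ≤ 2) {L β a d : ℝ} (hL : 0 < L) (hβ : 0 < β)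
    (ha : |a| ≤ 2 * L) (m : ℤ) (hd : d ^ 2 ≤ (a + 2 * m * L) ^ 2) :
    |heatKer i (a + 2 * m * L) β| ≤
      4 * (√β)⁻¹ ^ (i + 1) * Real.exp (-d ^ 2 / (8 * β)) * latticeBd L β m := by
  refine (abs_heatKer_le hi _ hβ).trans ?_
  have h : -(a + 2 * m * L) ^ 2 / (4 * β) =
      -(a + 2 * m * L) ^ 2 / (8 * β) + -(a + 2 * m * L) ^ 2 / (8 * β) := by
    field_simp; ring
  rw [h, Real.exp_add, mul_assoc (4 * _) _ (latticeBd L β m)]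
  gcongr
  exact exp_neg_sq_le_latticeBd hL hβ ha m

lemma summable_heatKer {i : ℕ} (hi : i ≤ 2) {L β a : ℝ} (hL : 0 < L) (hβ : 0 < β)
    (ha : |a| ≤ 2 * L) : Summable fun m : ℤ => heatKer i (a + 2 * m * L) β := by
  obtain ⟨S, hS, -⟩ := exists_hasSum_latticeBd hL hβ
  refine Summable.of_norm_bounded
    (hS.summable.mul_left (4 * (√β)⁻¹ ^ (i + 1) * Real.exp (-0 ^ 2 / (8 * β)))) fun m => ?_
  exact abs_heatKer_le_latticeBd hi hL hβ ha m (by simpa using sq_nonneg _)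

lemma abs_heatTheta_le {i : ℕ} (hi : i ≤ 2) {L β a d : ℝ} (hL : 0 < L) (hβ : 0 < β)
    (ha : |a| ≤ 2 * L) (hd : ∀ m : ℤ, d ^ 2 ≤ (a + 2 * m * L) ^ 2) :
    |heatTheta i L a β| ≤
      96 * (√β)⁻¹ ^ (i + 1) * (1 + √β / L) * Real.exp (-d ^ 2 / (8 * β)) := by
  obtain ⟨S, hS, hS'⟩ := exists_hasSum_latticeBd hL hβ
  have h := tsum_of_norm_bounded (f := fun m : ℤ => heatKer i (a + 2 * m * L) β)
    (hS.mul_left (4 * (√β)⁻¹ ^ (i + 1) * Real.exp (-d ^ 2 / (8 * β))))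
    fun m => abs_heatKer_le_latticeBd hi hL hβ ha m (hd m)
  refine h.trans ?_
  calc _ ≤ 4 * (√β)⁻¹ ^ (i + 1) * Real.exp (-d ^ 2 / (8 * β)) * (24 * (1 + √β / L)) := by gcongr
    _ = _ := by ring

lemma hasDerivAt_heatTheta_of_heatKer {i : ℕ} (hi : i + 1 ≤ 2) {L β a : ℝ} (hL : 0 < L)
    (hβ : 0 < β) (h : ∀ u, HasDerivAt (fun v => heatKer i v β) (heatKer (i + 1) u β) u)
    (ha : |a| < 2 * L) :
    HasDerivAt (fun v => heatTheta i L v β) (heatTheta (i + 1) L a β) a := by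
  obtain ⟨S, hS, -⟩ := exists_hasSum_latticeBd hL hβ
  refine hasDerivAt_tsum_of_isPreconnected (t := Set.Ioo (-(2 * L)) (2 * L)) (y₀ := a)
    (g := fun (m : ℤ) v => heatKer i (v + 2 * m * L) β)
    (g' := fun (m : ℤ) v => heatKer (i + 1) (v + 2 * m * L) β)
    (hS.summable.mul_left (4 * (√β)⁻¹ ^ (i + 1 + 1) * Real.exp (-0 ^ 2 / (8 * β))))
    isOpen_Ioo isPreconnected_Ioo (fun m y _ => (h _).comp_add_const y (2 * m * L))
    (fun m y hy => ?_) (abs_lt.1 ha) (summable_heatKer (by omega) hL hβ ha.le) (abs_lt.1 ha)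
  exact abs_heatKer_le_latticeBd hi hL hβ (abs_le.2 ⟨hy.1.le, hy.2.le⟩) m
    (by simpa using sq_nonneg _)

lemma hasDerivAt_heatTheta_zero {L β a : ℝ} (hL : 0 < L) (hβ : 0 < β) (ha : |a| < 2 * L) :
    HasDerivAt (fun v => heatTheta 0 L v β) (heatTheta 1 L a β) a :=
  hasDerivAt_heatTheta_of_heatKer (by norm_num) hL hβ (fun u => hasDerivAt_heatKer_zero u β) ha

lemma hasDerivAt_heatTheta_one {L β a : ℝ} (hL : 0 < L) (hβ : 0 < β) (ha : |a| < 2 * L) :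
    HasDerivAt (fun v => heatTheta 1 L v β) (heatTheta 2 L a β) a :=
  hasDerivAt_heatTheta_of_heatKer (by norm_num) hL hβ (fun u => hasDerivAt_heatKer_one u β) ha

lemma hasDerivAt_heatTheta_time {L β a : ℝ} (hL : 0 < L) (hβ : 0 < β) (ha : |a| ≤ 2 * L) :
    HasDerivAt (fun b => heatTheta 0 L a b) (heatTheta 2 L a β / 2) β := by
  obtain ⟨S, hS, -⟩ := exists_hasSum_latticeBd hL hβ
  have hmem : β ∈ Set.Ioo (β / 2) (2 * β) := ⟨by linarith, by linarith⟩
  unfold heatTheta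
  rw [← tsum_div_const]
  refine hasDerivAt_tsum_of_isPreconnected (t := Set.Ioo (β / 2) (2 * β)) (y₀ := β)
    (g := fun (m : ℤ) b => heatKer 0 (a + 2 * m * L) b)
    (g' := fun (m : ℤ) b => heatKer 2 (a + 2 * m * L) b / 2)
    (hS.summable.mul_left (4 * (√(β / 2))⁻¹ ^ 3))
    isOpen_Ioo isPreconnected_Ioo
    (fun m b hb => hasDerivAt_heatKer_time _ (by have := hb.1; linarith))
    (fun m b hb => ?_) hmem (summable_heatKer (by omega) hL hβ ha) hmem
  have hb0 : 0 < b := by have := hb.1; linarith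
  have h1 := abs_heatKer_le (le_refl 2) (a + 2 * m * L) hb0
  rw [Real.norm_eq_abs, abs_div, abs_two]
  calc |heatKer 2 (a + 2 * m * L) b| / 2 ≤ |heatKer 2 (a + 2 * m * L) b| := by
        linarith [abs_nonneg (heatKer 2 (a + 2 * m * L) b)]
    _ ≤ _ := h1
    _ ≤ 4 * (√(β / 2))⁻¹ ^ 3 * Real.exp (-(a + 2 * m * L) ^ 2 / (8 * β)) := by
        have : 0 < √(β / 2) := Real.sqrt_pos.2 (by linarith)
        have h3 : -(a + 2 * m * L) ^ 2 / (4 * b) ≤ -(a + 2 * m * L) ^ 2 / (8 * β) := by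
          rw [neg_div, neg_div, neg_le_neg_iff]
          exact div_le_div_of_nonneg_left (sq_nonneg _) (by positivity) (by linarith [hb.2])
        have h4 := hb.1.le
        gcongr
    _ ≤ _ := by
        gcongr
        exact exp_neg_sq_le_latticeBd hL hβ ha m

lemma g0L_eq_heatTheta {L β x y : ℝ} (hL : 0 < L) (hβ : 0 < β)
    (hx : x ∈ Set.Ioo (-(L / 2)) (L / 2)) (hy : y ∈ Set.Ioo (-(L / 2)) (L / 2)) :
    g0L L x y β = heatTheta 0 L (x - y) β - heatTheta 0 L (x + y - L) β := by
  obtain ⟨hx1, hx2⟩ := hx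
  obtain ⟨hy1, hy2⟩ := hy
  have s1 := summable_heatKer (i := 0) (by norm_num) hL hβ (a := x - y)
    (abs_le.2 ⟨by linarith, by linarith⟩)
  have s2 := summable_heatKer (i := 0) (by norm_num) hL hβ (a := x + y - L)
    (abs_le.2 ⟨by linarith, by linarith⟩)
  have s2' : Summable fun m : ℤ => heatKer 0 (x + y - L + 2 * (Equiv.neg ℤ m : ℤ) * L) β :=
    (Equiv.neg ℤ).summable_iff.2 s2
  unfold heatTheta
  rw [← (Equiv.neg ℤ).tsum_eq fun m : ℤ => heatKer 0 (x + y - L + 2 * m * L) β]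
  rw [← Summable.tsum_sub s1 s2', g0L, ← tsum_mul_left]
  refine tsum_congr fun m => ?_
  simp only [heatKer, Equiv.neg_apply]
  push_cast
  rw [mul_sub, show x + y - L + 2 * -(m : ℝ) * L = x + y - 2 * m * L - L by ring]

lemma sq_sub_le_sq_add_lattice {L x y : ℝ} (hL : 0 < L)
    (hx : x ∈ Set.Ioo (-(L / 2)) (L / 2)) (hy : y ∈ Set.Ioo (-(L / 2)) (L / 2)) (m : ℤ) :
    (x - y) ^ 2 ≤ (x - y + 2 * m * L) ^ 2 := by
  obtain ⟨hx1, hx2⟩ := hx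
  obtain ⟨hy1, hy2⟩ := hy
  rcases lt_trichotomy m 0 with hm | hm | hm
  · have : (m : ℝ) ≤ -1 := by exact_mod_cast (by omega : m ≤ -1)
    nlinarith [mul_nonneg (by nlinarith : 0 ≤ -(m : ℝ) * L) (by nlinarith : 0 ≤ -(x - y + m * L))]
  · simp [hm]
  · have : (1 : ℝ) ≤ m := by exact_mod_cast hm
    nlinarith [mul_nonneg (by nlinarith : 0 ≤ (m : ℝ) * L) (by nlinarith : 0 ≤ x - y + m * L)]

lemma sq_sub_le_sq_reflect_lattice {L x y : ℝ} (hL : 0 < L)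
    (hx : x ∈ Set.Ioo (-(L / 2)) (L / 2)) (hy : y ∈ Set.Ioo (-(L / 2)) (L / 2)) (m : ℤ) :
    (x - y) ^ 2 ≤ (x + y - L + 2 * m * L) ^ 2 := by
  obtain ⟨hx1, hx2⟩ := hx
  obtain ⟨hy1, hy2⟩ := hy
  rcases le_or_gt m 0 with hm | hm
  · have : (m : ℝ) ≤ 0 := by exact_mod_cast hm
    nlinarith [mul_nonneg (by nlinarith : 0 ≤ L - 2 * m * L - 2 * x)
      (by nlinarith : 0 ≤ L - 2 * m * L - 2 * y)]
  · have : (1 : ℝ) ≤ m := by exact_mod_cast hm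
    nlinarith [mul_nonneg (by nlinarith : 0 ≤ 2 * m * L - L + 2 * x)
      (by nlinarith : 0 ≤ 2 * m * L - L + 2 * y)]

/-- `h` is differentiable with partial derivatives `hx`, `hy`, `hxy`, `hb` on the box, with
Gaussian bounds in which every derivative may lose a factor `1 + √β`. -/
structure HasHeatBounds (L C : ℝ) (h hx hy hxy hb : ℝ → ℝ → ℝ → ℝ) : Prop where
  deriv_fst : ∀ {x y β}, x ∈ Set.Ioo (-(L / 2)) (L / 2) → y ∈ Set.Ioo (-(L / 2)) (L / 2) → 0 < β →
    HasDerivAt (fun t => h t y β) (hx x y β) x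
  deriv_snd : ∀ {x y β}, x ∈ Set.Ioo (-(L / 2)) (L / 2) → y ∈ Set.Ioo (-(L / 2)) (L / 2) → 0 < β →
    HasDerivAt (fun s => h x s β) (hy x y β) y
  deriv_mixed : ∀ {x y β}, x ∈ Set.Ioo (-(L / 2)) (L / 2) → y ∈ Set.Ioo (-(L / 2)) (L / 2) →
    0 < β → HasDerivAt (fun t => hy t y β) (hxy x y β) x
  deriv_time : ∀ {x y β}, x ∈ Set.Ioo (-(L / 2)) (L / 2) → y ∈ Set.Ioo (-(L / 2)) (L / 2) → 0 < β →
    HasDerivAt (fun b => h x y b) (hb x y β) β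
  bound : ∀ {x y β}, x ∈ Set.Ioo (-(L / 2)) (L / 2) → y ∈ Set.Ioo (-(L / 2)) (L / 2) → 0 < β →
    |h x y β| ≤ C * (√β)⁻¹ * Real.exp (-(x - y) ^ 2 / (8 * β))
  bound_fst : ∀ {x y β}, x ∈ Set.Ioo (-(L / 2)) (L / 2) → y ∈ Set.Ioo (-(L / 2)) (L / 2) → 0 < β →
    |hx x y β| ≤ C * (√β)⁻¹ ^ 2 * (1 + √β) * Real.exp (-(x - y) ^ 2 / (8 * β))
  bound_snd : ∀ {x y β}, x ∈ Set.Ioo (-(L / 2)) (L / 2) → y ∈ Set.Ioo (-(L / 2)) (L / 2) → 0 < β →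
    |hy x y β| ≤ C * (√β)⁻¹ ^ 2 * (1 + √β) * Real.exp (-(x - y) ^ 2 / (8 * β))
  bound_mixed : ∀ {x y β}, x ∈ Set.Ioo (-(L / 2)) (L / 2) → y ∈ Set.Ioo (-(L / 2)) (L / 2) →
    0 < β → |hxy x y β| ≤ C * (√β)⁻¹ ^ 3 * (1 + √β) * Real.exp (-(x - y) ^ 2 / (8 * β))
  bound_time : ∀ {x y β}, x ∈ Set.Ioo (-(L / 2)) (L / 2) → y ∈ Set.Ioo (-(L / 2)) (L / 2) → 0 < β →
    |hb x y β| ≤ C * (√β)⁻¹ ^ 3 * (1 + √β) * Real.exp (-(x - y) ^ 2 / (8 * β))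

lemma abs_sub_lt_of_mem_box {L x y : ℝ}
    (hx : x ∈ Set.Ioo (-(L / 2)) (L / 2)) (hy : y ∈ Set.Ioo (-(L / 2)) (L / 2)) :
    |x - y| < 2 * L := by
  obtain ⟨hx1, hx2⟩ := hx
  obtain ⟨hy1, hy2⟩ := hy
  exact abs_lt.2 ⟨by linarith, by linarith⟩

lemma abs_add_sub_lt_of_mem_box {L x y : ℝ}
    (hx : x ∈ Set.Ioo (-(L / 2)) (L / 2)) (hy : y ∈ Set.Ioo (-(L / 2)) (L / 2)) :
    |x + y - L| < 2 * L := by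
  obtain ⟨hx1, hx2⟩ := hx
  obtain ⟨hy1, hy2⟩ := hy
  exact abs_lt.2 ⟨by linarith, by linarith⟩

lemma abs_heatTheta_sub_le {L β x y : ℝ} (hL : 0 < L) (hβ : 0 < β)
    (hx : x ∈ Set.Ioo (-(L / 2)) (L / 2)) (hy : y ∈ Set.Ioo (-(L / 2)) (L / 2)) :
    |heatTheta 0 L (x - y) β - heatTheta 0 L (x + y - L) β| ≤
      768 * (√β)⁻¹ * Real.exp (-(x - y) ^ 2 / (8 * β)) := by
  have hs : 0 < √β := Real.sqrt_pos.2 hβ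
  have h1 := abs_sub_lt_of_mem_box hx hy
  have h2 := abs_add_sub_lt_of_mem_box hx hy
  rcases le_total (√β) L with h | h
  · have b1 := abs_heatTheta_le (i := 0) (by norm_num) hL hβ h1.le (sq_sub_le_sq_add_lattice hL hx hy)
    have b2 := abs_heatTheta_le (i := 0) (by norm_num) hL hβ h2.le
      (sq_sub_le_sq_reflect_lattice hL hx hy)
    have hr : √β / L ≤ 1 := (div_le_one hL).2 h
    calc _ ≤ _ := (abs_sub _ _).trans (add_le_add b1 b2)
      _ = 192 * (1 + √β / L) * (√β)⁻¹ * Real.exp (-(x - y) ^ 2 / (8 * β)) := by ring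
      _ ≤ 192 * (1 + 1) * (√β)⁻¹ * Real.exp (-(x - y) ^ 2 / (8 * β)) := by gcongr
      _ ≤ _ := by gcongr; norm_num
  · have hr : 1 ≤ √β / L := (one_le_div hL).2 h
    have hmv := Convex.norm_image_sub_le_of_norm_hasDerivWithin_le
      (f := fun v => heatTheta 0 L v β) (f' := fun v => heatTheta 1 L v β)
      (s := Set.Ioo (-(2 * L)) (2 * L)) (C := 192 * (√β)⁻¹ / L)
      (fun v hv => (hasDerivAt_heatTheta_zero hL hβ (abs_lt.2 hv)).hasDerivWithinAt)
      (fun v hv => by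
        have b := abs_heatTheta_le (i := 1) (d := 0) (by norm_num) hL hβ (abs_lt.2 hv).le
          (fun m => by simpa using sq_nonneg _)
        rw [Real.norm_eq_abs]
        refine b.trans ?_
        calc _ = 96 * (√β)⁻¹ ^ 2 * (1 + √β / L) := by simp
          _ ≤ 96 * (√β)⁻¹ ^ 2 * (√β / L + √β / L) := by gcongr
          _ = _ := by field_simp; ring)
      (convex_Ioo _ _) (abs_lt.1 h2) (abs_lt.1 h1)
    have hE : 1 / 2 ≤ Real.exp (-(x - y) ^ 2 / (8 * β)) := by
      have e1 := Real.add_one_le_exp (-(x - y) ^ 2 / (8 * β))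
      have e2 : (x - y) ^ 2 / (8 * β) ≤ 1 / 2 := by
        rw [div_le_iff₀ (by positivity)]
        have := Real.sq_sqrt hβ.le
        have : (x - y) ^ 2 ≤ L ^ 2 := by
          obtain ⟨hx1, hx2⟩ := hx
          obtain ⟨hy1, hy2⟩ := hy
          exact sq_le_sq' (by linarith) (by linarith)
        nlinarith
      rw [neg_div] at e1 ⊢
      linarith
    have hd : |x - y - (x + y - L)| ≤ 2 * L := by
      obtain ⟨hy1, hy2⟩ := hy
      exact abs_le.2 ⟨by linarith, by linarith⟩
    calc _ ≤ 192 * (√β)⁻¹ / L * |x - y - (x + y - L)| := hmv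
      _ ≤ 192 * (√β)⁻¹ / L * (2 * L) := by gcongr
      _ = 768 * (√β)⁻¹ * (1 / 2) := by field_simp; ring
      _ ≤ _ := by gcongr

lemma abs_heatTheta_add_abs_le {i : ℕ} (hi : i ≤ 2) {L β x y : ℝ} (hL : 1 ≤ L) (hβ : 0 < β)
    (hx : x ∈ Set.Ioo (-(L / 2)) (L / 2)) (hy : y ∈ Set.Ioo (-(L / 2)) (L / 2)) :
    |heatTheta i L (x - y) β| + |heatTheta i L (x + y - L) β| ≤
      768 * (√β)⁻¹ ^ (i + 1) * (1 + √β) * Real.exp (-(x - y) ^ 2 / (8 * β)) := by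
  have hs : 0 < √β := Real.sqrt_pos.2 hβ
  have hL0 : 0 < L := by linarith
  have b1 := abs_heatTheta_le hi hL0 hβ (abs_sub_lt_of_mem_box hx hy).le
    (sq_sub_le_sq_add_lattice hL0 hx hy)
  have b2 := abs_heatTheta_le hi hL0 hβ (abs_add_sub_lt_of_mem_box hx hy).le
    (sq_sub_le_sq_reflect_lattice hL0 hx hy)
  calc _ ≤ _ := add_le_add b1 b2
    _ = 192 * (√β)⁻¹ ^ (i + 1) * (1 + √β / L) * Real.exp (-(x - y) ^ 2 / (8 * β)) := by ring
    _ ≤ _ := by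
      gcongr
      · norm_num
      · exact div_le_self hs.le hL

lemma hasHeatBounds_g0L {L : ℝ} (hL : 1 ≤ L) :
    HasHeatBounds L 768 (g0L L)
      (fun x y β => heatTheta 1 L (x - y) β - heatTheta 1 L (x + y - L) β)
      (fun x y β => -heatTheta 1 L (x - y) β - heatTheta 1 L (x + y - L) β)
      (fun x y β => -heatTheta 2 L (x - y) β - heatTheta 2 L (x + y - L) β)
      (fun x y β => heatTheta 2 L (x - y) β / 2 - heatTheta 2 L (x + y - L) β / 2) := by
  have hL0 : 0 < L := by linarith
  constructor
  · intro x y β hx hy hβ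
    have h : HasDerivAt (fun t => heatTheta 0 L (t - y) β - heatTheta 0 L (t + (y - L)) β)
        (heatTheta 1 L (x - y) β - heatTheta 1 L (x + y - L) β) x := by
      refine ((hasDerivAt_heatTheta_zero hL0 hβ (abs_sub_lt_of_mem_box hx hy)).comp_sub_const
        x y).fun_sub ?_
      have := abs_add_sub_lt_of_mem_box hx hy
      rw [add_sub_assoc] at this ⊢
      exact (hasDerivAt_heatTheta_zero hL0 hβ this).comp_add_const x (y - L)
    refine h.congr_of_eventuallyEq ?_
    filter_upwards [Ioo_mem_nhds hx.1 hx.2] with t ht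
    rw [g0L_eq_heatTheta hL0 hβ ht hy, add_sub_assoc]
  · intro x y β hx hy hβ
    have h : HasDerivAt (fun s => heatTheta 0 L (x - s) β - heatTheta 0 L ((x - L) + s) β)
        (-heatTheta 1 L (x - y) β - heatTheta 1 L (x + y - L) β) y := by
      refine ((hasDerivAt_heatTheta_zero hL0 hβ (abs_sub_lt_of_mem_box hx hy)).comp_const_sub
        x y).fun_sub ?_
      have := abs_add_sub_lt_of_mem_box hx hy
      rw [add_sub_right_comm] at this ⊢
      exact (hasDerivAt_heatTheta_zero hL0 hβ this).comp_const_add (x - L) y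
    refine h.congr_of_eventuallyEq ?_
    filter_upwards [Ioo_mem_nhds hy.1 hy.2] with t ht
    rw [g0L_eq_heatTheta hL0 hβ hx ht, add_sub_right_comm]
  · intro x y β hx hy hβ
    refine ((hasDerivAt_heatTheta_one hL0 hβ (abs_sub_lt_of_mem_box hx hy)).comp_sub_const
        x y).fun_neg.fun_sub ?_
    have := abs_add_sub_lt_of_mem_box hx hy
    simp only [add_sub_assoc] at this ⊢
    exact (hasDerivAt_heatTheta_one hL0 hβ this).comp_add_const x (y - L)
  · intro x y β hx hy hβ
    refine ((hasDerivAt_heatTheta_time hL0 hβ (abs_sub_lt_of_mem_box hx hy).le).fun_sub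
      (hasDerivAt_heatTheta_time hL0 hβ
        (abs_add_sub_lt_of_mem_box hx hy).le)).congr_of_eventuallyEq ?_
    filter_upwards [lt_mem_nhds hβ] with b hb
    rw [g0L_eq_heatTheta hL0 hb hx hy]
  · intro x y β hx hy hβ
    rw [g0L_eq_heatTheta hL0 hβ hx hy]
    exact abs_heatTheta_sub_le hL0 hβ hx hy
  · intro x y β hx hy hβ
    exact (abs_sub _ _).trans (abs_heatTheta_add_abs_le (i := 1) (by norm_num) hL hβ hx hy)
  · intro x y β hx hy hβ
    refine (abs_sub _ _).trans ?_
    rw [abs_neg]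
    exact abs_heatTheta_add_abs_le (i := 1) (by norm_num) hL hβ hx hy
  · intro x y β hx hy hβ
    refine (abs_sub _ _).trans ?_
    rw [abs_neg]
    exact abs_heatTheta_add_abs_le (i := 2) (by norm_num) hL hβ hx hy
  · intro x y β hx hy hβ
    refine (abs_sub _ _).trans
      (le_trans ?_ (abs_heatTheta_add_abs_le (i := 2) (by norm_num) hL hβ hx hy))
    rw [abs_div, abs_div, abs_two]
    linarith [abs_nonneg (heatTheta 2 L (x - y) β), abs_nonneg (heatTheta 2 L (x + y - L) β)]

lemma hasHeatBounds_heatKer (L : ℝ) :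
    HasHeatBounds L 768 (fun x y β => heatKer 0 (x - y) β) (fun x y β => heatKer 1 (x - y) β)
      (fun x y β => -heatKer 1 (x - y) β) (fun x y β => -heatKer 2 (x - y) β)
      (fun x y β => heatKer 2 (x - y) β / 2) := by
  have key : ∀ {i : ℕ}, i ≤ 2 → ∀ (u : ℝ) {β : ℝ}, 0 < β →
      |heatKer i u β| ≤ 768 * (√β)⁻¹ ^ (i + 1) * Real.exp (-u ^ 2 / (8 * β)) := by
    intro i hi u β hβ
    refine (abs_heatKer_le hi u hβ).trans ?_
    have hs : 0 < √β := Real.sqrt_pos.2 hβ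
    have h3 : -u ^ 2 / (4 * β) ≤ -u ^ 2 / (8 * β) := by
      rw [neg_div, neg_div, neg_le_neg_iff]
      gcongr
      norm_num
    gcongr
    norm_num
  have key' : ∀ {i : ℕ}, i ≤ 2 → ∀ (u : ℝ) {β : ℝ}, 0 < β →
      |heatKer i u β| ≤ 768 * (√β)⁻¹ ^ (i + 1) * (1 + √β) * Real.exp (-u ^ 2 / (8 * β)) := by
    intro i hi u β hβ
    refine (key hi u hβ).trans ?_
    have hs : 0 < √β := Real.sqrt_pos.2 hβ
    refine mul_le_mul_of_nonneg_right ?_ (Real.exp_pos _).le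
    exact le_mul_of_one_le_right (by positivity) (by linarith)
  constructor
  · intro x y β _ _ _
    exact (hasDerivAt_heatKer_zero (x - y) β).comp_sub_const x y
  · intro x y β _ _ _
    exact (hasDerivAt_heatKer_zero (x - y) β).comp_const_sub x y
  · intro x y β _ _ _
    exact ((hasDerivAt_heatKer_one (x - y) β).comp_sub_const x y).fun_neg
  · intro x y β _ _ hβ
    exact hasDerivAt_heatKer_time (x - y) hβ
  · intro x y β _ _ hβ
    simpa using key (i := 0) (by norm_num) (x - y) hβ
  · intro x y β _ _ hβ
    exact key' (i := 1) (by norm_num) (x - y) hβ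
  · intro x y β _ _ hβ
    rw [abs_neg]
    exact key' (i := 1) (by norm_num) (x - y) hβ
  · intro x y β _ _ hβ
    rw [abs_neg]
    exact key' (i := 2) (by norm_num) (x - y) hβ
  · intro x y β _ _ hβ
    refine le_trans ?_ (key' (i := 2) (by norm_num) (x - y) hβ)
    rw [abs_div, abs_two]
    linarith [abs_nonneg (heatKer 2 (x - y) β)]

lemma exists_prod_fin_three_of_ne {j k : Fin 3} (h : j ≠ k) :
    ∃ l, l ≠ j ∧ l ≠ k ∧ ∀ f : Fin 3 → ℝ, ∏ i, f i = f j * f k * f l := by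
  have key : ∀ j k : Fin 3, j ≠ k → ∃ l, l ≠ j ∧ l ≠ k ∧ Finset.univ = {j, k, l} := by decide
  obtain ⟨l, hlj, hlk, hu⟩ := key j k h
  refine ⟨l, hlj, hlk, fun f => ?_⟩
  rw [hu, Finset.prod_insert (by simp [h, hlj.symm]), Finset.prod_pair hlk.symm, mul_assoc]

lemma one_add_sqrt_sq_le {β : ℝ} (hβ : 0 < β) : (1 + √β) ^ 2 ≤ 2 * (1 + β) := by
  nlinarith [Real.sq_sqrt hβ.le, sq_nonneg (1 - √β)]

lemma one_add_sqrt_le {β : ℝ} (hβ : 0 < β) : 1 + √β ≤ 2 * (1 + β) := by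
  nlinarith [Real.sq_sqrt hβ.le, sq_nonneg (1 - √β), Real.sqrt_nonneg β]

lemma exp_neg_sum_sq_div (x y : Fin 3 → ℝ) (β : ℝ) :
    Real.exp (-(∑ i, (x i - y i) ^ 2) / (8 * β)) =
      ∏ i, Real.exp (-(x i - y i) ^ 2 / (8 * β)) := by
  rw [← Real.exp_sum, ← Finset.sum_div, Finset.sum_neg_distrib]

namespace HasHeatBounds

variable {L C β : ℝ} {h hx hy hxy hb : ℝ → ℝ → ℝ → ℝ} {x y : Fin 3 → ℝ}

lemma exists_hasDerivAt_prod_time (H : HasHeatBounds L C h hx hy hxy hb) (hC : 0 < C)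
    (hβ : 0 < β) (hxm : ∀ i, x i ∈ Set.Ioo (-(L / 2)) (L / 2))
    (hym : ∀ i, y i ∈ Set.Ioo (-(L / 2)) (L / 2)) :
    ∃ D, HasDerivAt (fun b => ∏ i, h (x i) (y i) b) D β ∧
      |D| ≤ 6 * C ^ 3 * (1 + β) * (√β)⁻¹ ^ 5 *
        Real.exp (-(∑ i, (x i - y i) ^ 2) / (8 * β)) := by
  have hd := fun i => H.deriv_time (hxm i) (hym i) hβ
  have b0 := fun i => H.bound (hxm i) (hym i) hβ
  have b1 := fun i => H.bound_time (hxm i) (hym i) hβ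
  have hs : 0 < √β := Real.sqrt_pos.2 hβ
  rw [exp_neg_sum_sq_div]
  simp only [Fin.prod_univ_three]
  refine ⟨_, ((hd 0).fun_mul (hd 1)).fun_mul (hd 2), ?_⟩
  set E := fun i => Real.exp (-(x i - y i) ^ 2 / (8 * β)) with hE
  have hE0 : ∀ i, 0 ≤ E i := fun i => (Real.exp_pos _).le
  have key : ∀ i j k : Fin 3, |hb (x i) (y i) β * h (x j) (y j) β * h (x k) (y k) β| ≤
      2 * C ^ 3 * (1 + β) * (√β)⁻¹ ^ 5 * (E i * E j * E k) := by
    intro i j k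
    rw [abs_mul, abs_mul]
    calc _ ≤ (C * (√β)⁻¹ ^ 3 * (1 + √β) * E i) * (C * (√β)⁻¹ * E j) * (C * (√β)⁻¹ * E k) := by
          have h1 := b1 i
          have h2 := b0 j
          have h3 := b0 k
          have := hE0 i
          have := hE0 j
          gcongr
      _ = C ^ 3 * (√β)⁻¹ ^ 5 * (E i * E j * E k) * (1 + √β) := by ring
      _ ≤ C ^ 3 * (√β)⁻¹ ^ 5 * (E i * E j * E k) * (2 * (1 + β)) := by
          have := hE0 i
          have := hE0 j
          have := hE0 k
          have := one_add_sqrt_le hβ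
          gcongr
      _ = _ := by ring
  have k0 := abs_le.1 (key 0 1 2)
  have k1 := abs_le.1 (key 1 0 2)
  have k2 := abs_le.1 (key 2 0 1)
  change _ ≤ _ * (E 0 * E 1 * E 2)
  rw [abs_le]
  constructor <;> linarith

lemma exists_hasDerivAt_prod_mixed (H : HasHeatBounds L C h hx hy hxy hb) (hC : 0 < C)
    (hβ : 0 < β) (hxm : ∀ i, x i ∈ Set.Ioo (-(L / 2)) (L / 2))
    (hym : ∀ i, y i ∈ Set.Ioo (-(L / 2)) (L / 2)) (j k : Fin 3) :
    ∃ (D₁ : ℝ → ℝ) (D : ℝ), (∀ᶠ t in nhds (x j), HasDerivAt (fun s => ∏ i,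
        h (Function.update x j t i) (Function.update y k s i) β) (D₁ t) (y k)) ∧
      HasDerivAt D₁ D (x j) ∧
      |D| ≤ 6 * C ^ 3 * (1 + β) * (√β)⁻¹ ^ 5 *
        Real.exp (-(∑ i, (x i - y i) ^ 2) / (8 * β)) := by
  have b0 := fun i => H.bound (hxm i) (hym i) hβ
  have hs : 0 < √β := Real.sqrt_pos.2 hβ
  rw [exp_neg_sum_sq_div]
  set E := fun i => Real.exp (-(x i - y i) ^ 2 / (8 * β)) with hE
  have hE0 : ∀ i, 0 ≤ E i := fun i => (Real.exp_pos _).le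
  have hmem : ∀ᶠ t in nhds (x j), t ∈ Set.Ioo (-(L / 2)) (L / 2) :=
    Ioo_mem_nhds (hxm j).1 (hxm j).2
  by_cases hjk : j = k
  · subst hjk
    obtain ⟨k, hk⟩ := exists_ne j
    obtain ⟨l, hlj, hlk, hprod⟩ := exists_prod_fin_three_of_ne hk.symm
    simp only [hprod, Function.update_self, Function.update_of_ne hk, Function.update_of_ne hlj]
    refine ⟨fun t => hy t (y j) β * h (x k) (y k) β * h (x l) (y l) β, _,
      hmem.mono fun t ht => ((H.deriv_snd ht (hym j) hβ).mul_const _).mul_const _,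
      ((H.deriv_mixed (hxm j) (hym j) hβ).mul_const _).mul_const _, ?_⟩
    rw [abs_mul, abs_mul]
    calc _ ≤ (C * (√β)⁻¹ ^ 3 * (1 + √β) * E j) * (C * (√β)⁻¹ * E k) * (C * (√β)⁻¹ * E l) := by
          have h1 := H.bound_mixed (hxm j) (hym j) hβ
          have h2 := b0 k
          have h3 := b0 l
          have := hE0 j
          have := hE0 k
          gcongr
      _ = C ^ 3 * (√β)⁻¹ ^ 5 * (E j * E k * E l) * (1 + √β) := by ring
      _ ≤ C ^ 3 * (√β)⁻¹ ^ 5 * (E j * E k * E l) * (6 * (1 + β)) := by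
          have := hE0 j
          have := hE0 k
          have := hE0 l
          have := one_add_sqrt_le hβ
          gcongr
          linarith
      _ = _ := by ring
  · obtain ⟨l, hlj, hlk, hprod⟩ := exists_prod_fin_three_of_ne hjk
    simp only [hprod, Function.update_self, Function.update_of_ne hjk,
      Function.update_of_ne (Ne.symm hjk), Function.update_of_ne hlj, Function.update_of_ne hlk]
    refine ⟨fun t => h t (y j) β * hy (x k) (y k) β * h (x l) (y l) β, _,
      Filter.Eventually.of_forall fun t =>
        ((H.deriv_snd (hxm k) (hym k) hβ).const_mul _).mul_const _,
      ((H.deriv_fst (hxm j) (hym j) hβ).mul_const _).mul_const _, ?_⟩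
    rw [abs_mul, abs_mul]
    calc _ ≤ (C * (√β)⁻¹ ^ 2 * (1 + √β) * E j) * (C * (√β)⁻¹ ^ 2 * (1 + √β) * E k) *
            (C * (√β)⁻¹ * E l) := by
          have h1 := H.bound_fst (hxm j) (hym j) hβ
          have h2 := H.bound_snd (hxm k) (hym k) hβ
          have h3 := b0 l
          have := hE0 j
          have := hE0 k
          gcongr
      _ = C ^ 3 * (√β)⁻¹ ^ 5 * (E j * E k * E l) * (1 + √β) ^ 2 := by ring
      _ ≤ C ^ 3 * (√β)⁻¹ ^ 5 * (E j * E k * E l) * (6 * (1 + β)) := by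
          have := hE0 j
          have := hE0 k
          have := hE0 l
          have := one_add_sqrt_sq_le hβ
          gcongr
          linarith
      _ = _ := by ring

end HasHeatBounds

lemma G0inf_eq_prod_heatKer (x y : Fin 3 → ℝ) {β : ℝ} (hβ : 0 < β) :
    G0inf x y β = ∏ i, heatKer 0 (x i - y i) β := by
  simp only [heatKer, G0inf, Finset.prod_mul_distrib, Finset.prod_const, Finset.card_univ,
    Fintype.card_fin]
  rw [← Real.exp_sum, ← Finset.sum_div, Finset.sum_neg_distrib, ← Real.rpow_natCast,
    ← Real.rpow_mul (by positivity)]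
  norm_num

lemma G0inf_four_mul (x y : Fin 3 → ℝ) {β : ℝ} (hβ : 0 < β) :
    (8 * π) ^ (3/2 : ℝ) * G0inf x y (4 * β) =
      (√β)⁻¹ ^ 3 * Real.exp (-(∑ i, (x i - y i) ^ 2) / (8 * β)) := by
  have h1 : (√β)⁻¹ ^ 3 = β ^ (-(3/2) : ℝ) := by
    rw [inv_pow, Real.sqrt_eq_rpow, ← Real.rpow_natCast, ← Real.rpow_mul hβ.le,
      ← Real.rpow_neg hβ.le]
    norm_num
  have h2 : 2 * π * (4 * β) = 8 * π * β := by ring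
  rw [G0inf, h1, h2, Real.mul_rpow (by positivity) hβ.le, Real.rpow_neg (by positivity : 0 ≤ 8 * π)]
  have h3 : 2 * (4 * β) = 8 * β := by ring
  rw [h3]
  field_simp

/-- Gaussian bounds for `∂Z_{0,L}/∂β` and for the mixed second derivatives
`∂²Z_{0,L}/∂x_j ∂x'_k`: both are bounded by `c₁ (1+β) β^{-1} G_{0,∞}(x, x'; c₂ β)`. -/
theorem stmt_12 :
    ∃ c₁ c₂ : ℝ, 0 < c₁ ∧ 0 < c₂ ∧
      ∀ (L β : ℝ) (x x' : Fin 3 → ℝ) (j k : Fin 3), 1 ≤ L → 0 < β →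
        (∀ i, x i ∈ Set.Ioo (-(L / 2)) (L / 2)) →
        (∀ i, x' i ∈ Set.Ioo (-(L / 2)) (L / 2)) →
          |deriv (fun b : ℝ => Z0L L x x' b) β|
              ≤ c₁ * (1 + β) * β⁻¹ * G0inf x x' (c₂ * β) ∧
          |deriv (fun t : ℝ => deriv
              (fun s : ℝ => Z0L L (Function.update x j t) (Function.update x' k s) β)
              (x' k)) (x j)|
              ≤ c₁ * (1 + β) * β⁻¹ * G0inf x x' (c₂ * β) := by
  refine ⟨12 * 768 ^ 3 * (8 * π) ^ (3/2 : ℝ), 4, by positivity, by norm_num, ?_⟩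
  intro L β x x' j k hL hβ hx hx'
  have Hg := hasHeatBounds_g0L hL
  have Hk := hasHeatBounds_heatKer L
  have hC : (0 : ℝ) < 768 := by norm_num
  have hrhs : 12 * 768 ^ 3 * (8 * π) ^ (3/2 : ℝ) * (1 + β) * β⁻¹ * G0inf x x' (4 * β) =
      12 * 768 ^ 3 * (1 + β) * (√β)⁻¹ ^ 5 *
        Real.exp (-(∑ i, (x i - x' i) ^ 2) / (8 * β)) := by
    have h1 : β⁻¹ = (√β)⁻¹ ^ 2 := by rw [inv_pow, Real.sq_sqrt hβ.le]
    calc _ = 12 * 768 ^ 3 * (1 + β) * β⁻¹ * ((8 * π) ^ (3/2 : ℝ) * G0inf x x' (4 * β)) := by ring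
      _ = _ := by rw [G0inf_four_mul x x' hβ, h1]; ring
  rw [hrhs]
  constructor
  · obtain ⟨D, hD, hDb⟩ := Hg.exists_hasDerivAt_prod_time hC hβ hx hx'
    obtain ⟨D', hD', hDb'⟩ := Hk.exists_hasDerivAt_prod_time hC hβ hx hx'
    have hZ : HasDerivAt (fun b => Z0L L x x' b) (D - D') β := by
      refine (hD.fun_sub hD').congr_of_eventuallyEq ?_
      filter_upwards [lt_mem_nhds hβ] with b hb
      rw [Z0L, G0L, G0inf_eq_prod_heatKer x x' hb]
    rw [hZ.deriv]
    refine ((abs_sub _ _).trans (add_le_add hDb hDb')).trans (le_of_eq ?_)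
    ring
  · obtain ⟨F, D, hF, hD, hDb⟩ := Hg.exists_hasDerivAt_prod_mixed hC hβ hx hx' j k
    obtain ⟨F', D', hF', hD', hDb'⟩ := Hk.exists_hasDerivAt_prod_mixed hC hβ hx hx' j k
    have hZ : HasDerivAt (fun t : ℝ => deriv
        (fun s : ℝ => Z0L L (Function.update x j t) (Function.update x' k s) β) (x' k))
        (D - D') (x j) := by
      refine (hD.fun_sub hD').congr_of_eventuallyEq ?_
      filter_upwards [hF, hF'] with t ht ht'
      simp only [Z0L, G0L, G0inf_eq_prod_heatKer _ _ hβ]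
      exact (ht.fun_sub ht').deriv
    rw [hZ.deriv]
    refine ((abs_sub _ _).trans (add_le_add hDb hDb')).trans (le_of_eq ?_)
    ring
end
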